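/- arXiv:math/0612527 — 2 statements merged into one kernel-verified Lean document; each statement's English description precedes it below -/
import Mathlib

section
/- Let λ > 0, let g be continuously differentiable on the closed unit ball B^d, and set f(x) = (1−‖x‖²)·g(x). Then for every n ≥ 2 and all x ∈ B^d, proj_{V_n^d(I)} f(x) = (1−‖x‖²)·proj_{V_{n−2}^d(W_1)} g(x), where proj_{V_{n−2}^d(W_1)} g(x) = (d(d/2+1)/ω_d)·∫_{B^d} g(y) P_{n−2}(W_1; x, y) (1−‖y‖²) dy. -/
open MeasureTheory Metric MvPolynomial RealInnerProductSpace

noncomputable section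

/-- Generalized binomial coefficient `C(z, k)` for real `z`. -/
def genBinom (z : ℝ) (k : ℕ) : ℝ := (∏ i ∈ Finset.range k, (z - i)) / (Nat.factorial k)

/-- The Jacobi polynomial `P_n^{(a,b)}`, normalized so that `P_n^{(a,b)}(1) = C(n+a, n)`. -/
def jacobiPoly (n : ℕ) (a b : ℝ) : Polynomial ℝ :=
  ∑ s ∈ Finset.range (n + 1),
    Polynomial.C (genBinom ((n : ℝ) + a) (n - s) * genBinom ((n : ℝ) + b) s) *
      (Polynomial.C (2⁻¹) * (Polynomial.X - 1)) ^ s *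
      (Polynomial.C (2⁻¹) * (Polynomial.X + 1)) ^ (n - s)

/-- The Jacobi polynomial as a real function. -/
def jacobiR (n : ℕ) (a b x : ℝ) : ℝ := (jacobiPoly n a b).eval x

/-- The Laplace operator on polynomials in `d` variables. -/
def mvLaplacian {d : ℕ} (p : MvPolynomial (Fin d) ℝ) : MvPolynomial (Fin d) ℝ :=
  ∑ i : Fin d, pderiv i (pderiv i p)

/-- The polynomial `‖x‖² = x₁² + ⋯ + x_d²`. -/
def sumSq (d : ℕ) : MvPolynomial (Fin d) ℝ := ∑ i : Fin d, X i ^ 2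

/-- `σ_m`, the dimension of the space of spherical harmonics of degree `m` in `d` variables. -/
def sigmaDim (d m : ℕ) : ℕ := (m + d - 1).choose (d - 1) - (m + d - 3).choose (d - 1)

/-- The surface area `ω_d = 2 π^{d/2} / Γ(d/2)` of the unit sphere `S^{d-1}`. -/
def omegaD (d : ℕ) : ℝ := 2 * Real.pi ^ ((d : ℝ) / 2) / Real.Gamma ((d : ℝ) / 2)

/-- Euclidean space `ℝ^d`. -/
abbrev Edim (d : ℕ) := EuclideanSpace ℝ (Fin d)

/-- Evaluation of a polynomial in `d` variables at a point of `ℝ^d`. -/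
def pEval {d : ℕ} (p : MvPolynomial (Fin d) ℝ) (x : Edim d) : ℝ := eval (fun i => x i) p

/-- The surface measure `dω` on the unit sphere `S^{d-1}`. -/
def sphMeasure (d : ℕ) : Measure (sphere (0 : Edim d) 1) :=
  (volume : Measure (Edim d)).toSphere

/-- The Sobolev inner product `⟨f,g⟩_I`. -/
def innerI (d : ℕ) (lam : ℝ) (f g : Edim d → ℝ) : ℝ :=
  (lam / omegaD d) * ∫ x in closedBall (0 : Edim d) 1, ⟪gradient f x, gradient g x⟫ +
    (1 / omegaD d) * ∫ y : sphere (0 : Edim d) 1, f y * g y ∂(sphMeasure d)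

/-- The Sobolev inner product `⟨f,g⟩_II`. -/
def innerII (d : ℕ) (lam : ℝ) (f g : Edim d → ℝ) : ℝ :=
  (lam / omegaD d) * ∫ x in closedBall (0 : Edim d) 1, ⟪gradient f x, gradient g x⟫ +
    f 0 * g 0

/-- The polynomials `U_{j,ν}^n`. -/
def Upoly (d : ℕ) (Y : (m : ℕ) → Fin (sigmaDim d m) → MvPolynomial (Fin d) ℝ)
    (n j : ℕ) (ν : Fin (sigmaDim d (n - 2 * j))) : MvPolynomial (Fin d) ℝ :=
  if j = 0 then Y (n - 2 * j) ν
  else (1 - sumSq d) *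
      Polynomial.aeval (2 * sumSq d - 1)
        (jacobiPoly (j - 1) 1 ((n : ℝ) - 2 * (j : ℝ) + ((d : ℝ) - 2) / 2)) *
      Y (n - 2 * j) ν


/-- The orthogonal polynomials
`P_{j,ν}^m(W₁;x) = P_j^{(1, m-2j+(d-2)/2)}(2‖x‖²-1) Y_ν^{m-2j}(x)` of `V_m^d(W₁)`. -/
def PW1 (d : ℕ) (Y : (m : ℕ) → Fin (sigmaDim d m) → MvPolynomial (Fin d) ℝ)
    (m j : ℕ) (ν : Fin (sigmaDim d (m - 2 * j))) : MvPolynomial (Fin d) ℝ :=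
  Polynomial.aeval (2 * sumSq d - 1)
      (jacobiPoly j 1 ((m : ℝ) - 2 * (j : ℝ) + ((d : ℝ) - 2) / 2)) *
    Y (m - 2 * j) ν

/-- The reproducing kernel `P_m(W₁; x, y)` of `V_m^d(W₁)`. -/
def kernW1 (d : ℕ) (Y : (m : ℕ) → Fin (sigmaDim d m) → MvPolynomial (Fin d) ℝ)
    (m : ℕ) (x y : Edim d) : ℝ :=
  ∑ j ∈ Finset.range (m / 2 + 1), ∑ ν : Fin (sigmaDim d (m - 2 * j)),
    pEval (PW1 d Y m j ν) x * pEval (PW1 d Y m j ν) y /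
      (((d : ℝ) * ((d : ℝ) / 2 + 1) / omegaD d) *
        ∫ z in closedBall (0 : Edim d) 1, (pEval (PW1 d Y m j ν) z) ^ 2 * (1 - ‖z‖ ^ 2))

/-- The projection `proj_{V_n^d(I)} f`. -/
def projI (d : ℕ) (lam : ℝ) (Y : (m : ℕ) → Fin (sigmaDim d m) → MvPolynomial (Fin d) ℝ)
    (n : ℕ) (f : Edim d → ℝ) (x : Edim d) : ℝ :=
  ∑ j ∈ Finset.range (n / 2 + 1), ∑ ν : Fin (sigmaDim d (n - 2 * j)),
    innerI d lam f (pEval (Upoly d Y n j ν)) /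
        innerI d lam (pEval (Upoly d Y n j ν)) (pEval (Upoly d Y n j ν)) *
      pEval (Upoly d Y n j ν) x

/-- The projection `Y_m f` of `f` onto the spherical harmonics of degree `m`. -/
def Yproj (d : ℕ) (Y : (m : ℕ) → Fin (sigmaDim d m) → MvPolynomial (Fin d) ℝ)
    (m : ℕ) (f : Edim d → ℝ) (x : Edim d) : ℝ :=
  ∑ ν : Fin (sigmaDim d m),
    ((1 / omegaD d) * ∫ y : sphere (0 : Edim d) 1,
        f y * pEval (Y m ν) y ∂(sphMeasure d)) *
      pEval (Y m ν) x

/-- The extension by zero of a Lipschitz function on the closed ball vanishing on the sphere is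
Lipschitz. -/
theorem lip_ext {d : ℕ} {F : Edim d → ℝ} {K : NNReal}
    (hF : LipschitzOnWith K F (closedBall (0 : Edim d) 1))
    (h0 : ∀ x ∈ sphere (0 : Edim d) 1, F x = 0) :
    LipschitzWith K ((closedBall (0 : Edim d) 1).indicator F) := by
  have key : ∀ x y : Edim d, x ∈ closedBall (0 : Edim d) 1 → y ∉ closedBall (0 : Edim d) 1 →
      dist (F x) 0 ≤ K * dist x y := by
    intro x y hx hy
    have hc : ContinuousOn (fun t : ℝ => ‖x + t • (y - x)‖) (Set.Icc 0 1) := by fun_prop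
    have hm : (1 : ℝ) ∈ (fun t : ℝ => ‖x + t • (y - x)‖) '' Set.Icc (0 : ℝ) 1 := by
      apply intermediate_value_Icc zero_le_one hc
      simp only [mem_closedBall, dist_zero_right, not_le] at hx hy
      constructor
      · simpa using hx
      · simpa using hy.le
    obtain ⟨t, ht, htn⟩ := hm
    simp only at htn
    have hz : x + t • (y - x) ∈ sphere (0 : Edim d) 1 := by simpa using htn
    have h1 := hF.dist_le_mul x hx _ (sphere_subset_closedBall hz)
    rw [h0 _ hz] at h1
    refine h1.trans ?_
    gcongr
    rw [dist_comm, dist_eq_norm, add_sub_cancel_left, norm_smul, Real.norm_of_nonneg ht.1,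
      dist_comm x y, dist_eq_norm]
    exact mul_le_of_le_one_left (norm_nonneg _) ht.2
  refine LipschitzWith.of_dist_le_mul fun x y => ?_
  by_cases hx : x ∈ closedBall (0 : Edim d) 1 <;> by_cases hy : y ∈ closedBall (0 : Edim d) 1
  · rw [Set.indicator_of_mem hx, Set.indicator_of_mem hy]
    exact hF.dist_le_mul x hx y hy
  · rw [Set.indicator_of_mem hx, Set.indicator_of_notMem hy]
    exact key x y hx hy
  · rw [Set.indicator_of_mem hy, Set.indicator_of_notMem hx, dist_comm, dist_comm x y]
    exact key y x hy hx
  · rw [Set.indicator_of_notMem hx, Set.indicator_of_notMem hy]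
    simp only [dist_self]
    positivity

theorem sphere_ae {d : ℕ} : ∀ᵐ x : Edim d, x ∉ sphere (0 : Edim d) 1 := by
  have := Measure.addHaar_sphere_of_ne_zero (volume : Measure (Edim d)) 0 one_ne_zero
  exact measure_eq_zero_iff_ae_notMem.1 this

theorem ibp0 {d : ℕ} {F : Edim d → ℝ}
    (hF : ContDiffOn ℝ 1 F (closedBall (0 : Edim d) 1))
    (h0 : ∀ x ∈ sphere (0 : Edim d) 1, F x = 0) (v : Edim d) :
    IntegrableOn (fun x => fderiv ℝ F x v) (closedBall (0 : Edim d) 1) ∧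
      ∫ x in closedBall (0 : Edim d) 1, fderiv ℝ F x v = 0 := by
  obtain ⟨K, hK⟩ := hF.exists_lipschitzOnWith one_ne_zero (convex_closedBall _ _)
    (isCompact_closedBall _ _)
  have hG := lip_ext hK h0
  set G := (closedBall (0 : Edim d) 1).indicator F with hGdef
  have hcomp : HasCompactSupport G :=
    HasCompactSupport.intro (isCompact_closedBall (0 : Edim d) 1)
      (fun x hx => Set.indicator_of_notMem hx _)
  have hin : ∀ w : Edim d, ∀ x ∈ ball (0 : Edim d) 1, lineDeriv ℝ G x w = fderiv ℝ F x w := by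
    intro w x hx
    have hd : DifferentiableAt ℝ F x :=
      ((hF x (ball_subset_closedBall hx)).contDiffAt
        (Filter.mem_of_superset (isOpen_ball.mem_nhds hx) ball_subset_closedBall)).differentiableAt
        one_ne_zero
    have he : G =ᶠ[nhds x] F := by
      filter_upwards [isOpen_ball.mem_nhds hx] with y hy
      exact Set.indicator_of_mem (ball_subset_closedBall hy) _
    have hd' : DifferentiableAt ℝ G x := hd.congr_of_eventuallyEq he
    rw [hd'.lineDeriv_eq_fderiv, he.fderiv_eq]
  have hout : ∀ w : Edim d, ∀ x ∉ closedBall (0 : Edim d) 1, lineDeriv ℝ G x w = 0 := by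
    intro w x hx
    have he : G =ᶠ[nhds x] fun _ => 0 := by
      filter_upwards [isClosed_closedBall.isOpen_compl.mem_nhds hx] with y hy
      exact Set.indicator_of_notMem hy _
    have hd' : DifferentiableAt ℝ G x := (differentiableAt_const 0).congr_of_eventuallyEq he
    rw [hd'.lineDeriv_eq_fderiv, he.fderiv_eq]
    simp
  have hae : ∀ w : Edim d, ∀ᵐ x : Edim d, lineDeriv ℝ G x w =
      (closedBall (0 : Edim d) 1).indicator (fun x => fderiv ℝ F x w) x := by
    intro w
    filter_upwards [sphere_ae] with x hx
    by_cases hx1 : x ∈ closedBall (0 : Edim d) 1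
    · rw [Set.indicator_of_mem hx1]
      apply hin
      simp only [mem_sphere, mem_closedBall, mem_ball] at *
      exact lt_of_le_of_ne hx1 hx
    · rw [Set.indicator_of_notMem hx1, hout w x hx1]
  constructor
  · have h1 := (hG.locallyIntegrable_lineDeriv (μ := volume) v).integrableOn_isCompact
      (isCompact_closedBall (0 : Edim d) 1)
    refine h1.congr_fun_ae ?_
    filter_upwards [ae_restrict_of_ae (hae v), ae_restrict_mem measurableSet_closedBall]
      with x hx hx1
    rw [hx, Set.indicator_of_mem hx1]
  · have h1 := LipschitzWith.integral_lineDeriv_mul_eq (μ := volume)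
      (LipschitzWith.const (1 : ℝ) : LipschitzWith 0 (fun _ : Edim d => (1:ℝ))) hG hcomp (-v)
    have hc : ∀ x w : Edim d, lineDeriv ℝ (fun _ : Edim d => (1 : ℝ)) x w = 0 := by
      intro x w
      simp [lineDeriv]
    simp only [hc, neg_neg, mul_one, zero_mul, integral_zero] at h1
    rw [← integral_indicator measurableSet_closedBall, ← integral_congr_ae (hae v), ← h1]

theorem pEval_hasFDerivAt {d : ℕ} (p : MvPolynomial (Fin d) ℝ) (x : Edim d) :
    HasFDerivAt (pEval p) (∑ i, pEval (pderiv i p) x • (EuclideanSpace.proj i : Edim d →L[ℝ] ℝ))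
      x := by
  induction p using MvPolynomial.induction_on with
  | C a =>
    have : pEval (C a : MvPolynomial (Fin d) ℝ) = fun _ => a := by
      ext; simp [pEval]
    rw [this]
    simpa [pEval] using hasFDerivAt_const a x
  | add p q hp hq =>
    have : pEval (p + q) = fun x => pEval p x + pEval q x := by ext; simp [pEval]
    rw [this]
    refine (hp.add hq).congr_fderiv ?_
    simp [pEval, add_smul, Finset.sum_add_distrib]
  | mul_X p j hp =>
    have : pEval (p * X j) = fun x => pEval p x * x j := by ext; simp [pEval]
    rw [this]
    have hj : HasFDerivAt (fun x : Edim d => x j) (EuclideanSpace.proj j : Edim d →L[ℝ] ℝ) x :=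
      (EuclideanSpace.proj j : Edim d →L[ℝ] ℝ).hasFDerivAt
    refine (hp.mul hj).congr_fderiv ?_
    ext v
    simp only [pEval, Derivation.leibniz, pderiv_X, smul_eq_mul, map_add, map_mul, eval_X,
      add_apply, smul_apply, sum_apply, add_mul, Finset.sum_add_distrib, Finset.mul_sum,
      EuclideanSpace.coe_proj]
    congr 1
    · rw [Finset.sum_eq_single j]
      · simp
      · intro b _ hb
        rw [Pi.single_eq_of_ne hb.symm]
        simp
      · simp
    · apply Finset.sum_congr rfl; intros; ring

theorem pEval_contDiff {d : ℕ} (p : MvPolynomial (Fin d) ℝ) : ContDiff ℝ 1 (pEval p) := by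
  induction p using MvPolynomial.induction_on with
  | C a =>
    have : pEval (C a : MvPolynomial (Fin d) ℝ) = fun _ => a := by
      ext; simp [pEval]
    rw [this]; exact contDiff_const
  | add p q hp hq =>
    have : pEval (p + q) = fun x => pEval p x + pEval q x := by ext; simp [pEval]
    rw [this]; exact hp.add hq
  | mul_X p j hp =>
    have : pEval (p * X j) = fun x => pEval p x * x j := by ext; simp [pEval]
    rw [this]
    exact hp.mul (EuclideanSpace.proj j : Edim d →L[ℝ] ℝ).contDiff

theorem green {d : ℕ} {f : Edim d → ℝ} (hf : ContDiffOn ℝ 1 f (closedBall (0 : Edim d) 1))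
    (h0 : ∀ x ∈ sphere (0 : Edim d) 1, f x = 0) (p : MvPolynomial (Fin d) ℝ) :
    ∫ x in closedBall (0 : Edim d) 1, ⟪gradient f x, gradient (pEval p) x⟫ =
      - ∫ x in closedBall (0 : Edim d) 1, f x * pEval (mvLaplacian p) x := by
  have H := fun i : Fin d => ibp0 (F := fun x => f x * pEval (pderiv i p) x)
    (hf.mul (pEval_contDiff (pderiv i p)).contDiffOn)
    (fun x hx => by simp [h0 x hx]) (EuclideanSpace.single i 1)
  have hint : Integrable (fun x => f x * pEval (mvLaplacian p) x)
      (volume.restrict (closedBall (0 : Edim d) 1)) :=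
    (hf.continuousOn.mul (pEval_contDiff _).continuous.continuousOn).integrableOn_compact
      (isCompact_closedBall _ _)
  have hs : ∫ x in closedBall (0 : Edim d) 1, ∑ i : Fin d,
      fderiv ℝ (fun x => f x * pEval (pderiv i p) x) x (EuclideanSpace.single i 1) = 0 := by
    rw [integral_finsetSum _ (fun i _ => (H i).1)]
    exact Finset.sum_eq_zero fun i _ => (H i).2
  have heq : ∀ᵐ x ∂(volume.restrict (closedBall (0 : Edim d) 1)),
      ⟪gradient f x, gradient (pEval p) x⟫ = (∑ i : Fin d,
      fderiv ℝ (fun x => f x * pEval (pderiv i p) x) x (EuclideanSpace.single i 1)) -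
        f x * pEval (mvLaplacian p) x := by
    filter_upwards [ae_restrict_of_ae sphere_ae, ae_restrict_mem measurableSet_closedBall]
      with x hx hx1
    have hxb : x ∈ ball (0 : Edim d) 1 := by
      simp only [mem_sphere, mem_closedBall, mem_ball] at *
      exact lt_of_le_of_ne hx1 hx
    have hd : DifferentiableAt ℝ f x :=
      ((hf x hx1).contDiffAt
        (Filter.mem_of_superset (isOpen_ball.mem_nhds hxb)
          ball_subset_closedBall)).differentiableAt one_ne_zero
    have h1 : ∀ i : Fin d, fderiv ℝ (fun x => f x * pEval (pderiv i p) x) x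
        (EuclideanSpace.single i 1) = f x * pEval (pderiv i (pderiv i p)) x +
          pEval (pderiv i p) x * fderiv ℝ f x (EuclideanSpace.single i 1) := by
      intro i
      have h2 := (hd.hasFDerivAt.mul (pEval_hasFDerivAt (pderiv i p) x)).fderiv
      have h3 : fderiv ℝ (fun x => f x * pEval (pderiv i p) x) x = _ := h2
      rw [h3]
      simp
    simp_rw [h1]
    have hl : pEval (mvLaplacian p) x = ∑ i, pEval (pderiv i (pderiv i p)) x := by
      simp [pEval, mvLaplacian]
    rw [hl, Finset.sum_add_distrib, Finset.mul_sum, add_sub_cancel_left, real_inner_comm]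
    unfold gradient
    rw [InnerProductSpace.toDual_symm_apply, (pEval_hasFDerivAt p x).fderiv]
    simp only [sum_apply, smul_apply,
      smul_eq_mul]
    refine Finset.sum_congr rfl fun i _ => ?_
    congr 1
    have h5 : fderiv ℝ f x (EuclideanSpace.single i 1) =
        ⟪(InnerProductSpace.toDual ℝ (Edim d)).symm (fderiv ℝ f x),
          EuclideanSpace.single i (1 : ℝ)⟫ := InnerProductSpace.toDual_symm_apply.symm
    rw [h5, EuclideanSpace.inner_single_right]
    simp
  have hint2 : Integrable (fun x => ∑ i : Fin d,
      fderiv ℝ (fun x => f x * pEval (pderiv i p) x) x (EuclideanSpace.single i 1))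
      (volume.restrict (closedBall (0 : Edim d) 1)) :=
    integrable_finsetSum _ (fun i _ => (H i).1)
  rw [integral_congr_ae heq, integral_sub hint2 hint, hs, zero_sub]

theorem genBinom_succ (z : ℝ) (k : ℕ) :
    genBinom z (k + 1) * (k + 1) = genBinom z k * (z - k) := by
  unfold genBinom
  rw [Finset.prod_range_succ, Nat.factorial_succ]
  have : (Nat.factorial k : ℝ) ≠ 0 := by positivity
  push_cast
  field_simp

/-- The operator on the variable `s = ‖x‖²`. -/
def Lop (b : ℝ) (q : Polynomial ℝ) : Polynomial ℝ :=
  Polynomial.X * Polynomial.derivative (Polynomial.derivative q) + Polynomial.C (b + 1) * Polynomial.derivative q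

theorem Lop_basis (b : ℝ) (i l : ℕ) :
    Lop b ((1 - Polynomial.X) * ((Polynomial.X - 1) ^ i * Polynomial.X ^ l)) + Polynomial.C (((i + l : ℕ) + 1) * ((i + l : ℕ) + 1 + b)) *
      ((Polynomial.X - 1) ^ i * Polynomial.X ^ l) =
    Polynomial.C ((l : ℝ) * (l + b)) * ((Polynomial.X - 1) ^ i * Polynomial.X ^ l - (Polynomial.X - 1) ^ (i + 1) * Polynomial.X ^ (l - 1)) -
    Polynomial.C ((i : ℝ) * (i + 1)) * ((Polynomial.X - 1) ^ (i - 1) * Polynomial.X ^ (l + 1) - (Polynomial.X - 1) ^ i * Polynomial.X ^ l) := by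
  unfold Lop
  have h2 : Polynomial.C (2 : ℝ) = 2 := map_ofNat _ 2
  rcases i with _ | _ | i <;> rcases l with _ | _ | l <;>
  · simp [Polynomial.derivative_mul, Polynomial.derivative_pow, h2]
    ring

theorem jacobi_comp (k : ℕ) (b : ℝ) :
    (jacobiPoly k 1 b).comp (2 * Polynomial.X - 1) = ∑ i ∈ Finset.range (k + 1),
      Polynomial.C (genBinom ((k : ℝ) + 1) (k - i) * genBinom ((k : ℝ) + b) i) *
        ((Polynomial.X - 1) ^ i * Polynomial.X ^ (k - i)) := by
  unfold jacobiPoly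
  rw [Polynomial.sum_comp]
  refine Finset.sum_congr rfl fun i _ => ?_
  have h2 : Polynomial.C (2⁻¹ : ℝ) * 2 = 1 := by
    rw [← Polynomial.C_ofNat, ← Polynomial.C_mul]; norm_num
  have e1 : Polynomial.C (2⁻¹ : ℝ) * (2 * Polynomial.X - 1 - 1) = Polynomial.X - 1 := by
    linear_combination (Polynomial.X - 1) * h2
  have e2 : Polynomial.C (2⁻¹ : ℝ) * (2 * Polynomial.X - 1 + 1) = Polynomial.X := by
    linear_combination Polynomial.X * h2
  simp only [Polynomial.mul_comp, Polynomial.pow_comp, Polynomial.C_comp, Polynomial.sub_comp, Polynomial.add_comp, Polynomial.X_comp, Polynomial.one_comp, e1, e2]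
  ring

theorem jacobi_ode (k : ℕ) (b : ℝ) :
    Lop b ((1 - Polynomial.X) * (jacobiPoly k 1 b).comp (2 * Polynomial.X - 1)) =
      Polynomial.C (-(((k : ℝ) + 1) * (k + 1 + b))) * (jacobiPoly k 1 b).comp (2 * Polynomial.X - 1) := by
  rw [jacobi_comp, Finset.mul_sum, Finset.mul_sum]
  set c : ℕ → ℝ := fun i => genBinom ((k : ℝ) + 1) (k - i) * genBinom ((k : ℝ) + b) i with hc
  have hLsum : ∀ (s : Finset ℕ) (F : ℕ → Polynomial ℝ), Lop b (∑ i ∈ s, F i) = ∑ i ∈ s, Lop b (F i) := by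
    intro s F
    simp [Lop, Finset.mul_sum, Finset.sum_add_distrib]
  have hLC : ∀ (a : ℝ) (q : Polynomial ℝ), Lop b (Polynomial.C a * q) = Polynomial.C a * Lop b q := by
    intro a q
    simp [Lop]
    ring
  rw [hLsum, ← sub_eq_zero, ← Finset.sum_sub_distrib]
  let T : ℕ → Polynomial ℝ := fun i => Polynomial.C (c i * (i * (i + 1))) *
    ((Polynomial.X - 1) ^ (i - 1) * Polynomial.X ^ (k - i + 1) - (Polynomial.X - 1) ^ i * Polynomial.X ^ (k - i))
  let T' : ℕ → Polynomial ℝ := fun i => if i ≤ k then T i else 0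
  have hT : ∀ i ∈ Finset.range (k + 1),
      Lop b ((1 - Polynomial.X) * (Polynomial.C (c i) * ((Polynomial.X - 1) ^ i * Polynomial.X ^ (k - i)))) -
        Polynomial.C (-(((k : ℝ) + 1) * (k + 1 + b))) * (Polynomial.C (c i) * ((Polynomial.X - 1) ^ i * Polynomial.X ^ (k - i))) =
      T' (i + 1) - T' i := by
    intro i hi
    have hik : i ≤ k := Nat.lt_succ_iff.1 (Finset.mem_range.1 hi)
    obtain ⟨l, rfl⟩ := Nat.exists_eq_add_of_le hik
    have hb := Lop_basis b i l
    have e : (1 - Polynomial.X) * (Polynomial.C (c i) * ((Polynomial.X - 1) ^ i * Polynomial.X ^ l)) =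
      Polynomial.C (c i) * ((1 - Polynomial.X) * ((Polynomial.X - 1) ^ i * Polynomial.X ^ l)) := by ring
    simp only [Nat.add_sub_cancel_left, e, hLC]
    have hTi : T' i = Polynomial.C (c i) * (Polynomial.C ((i : ℝ) * (i + 1)) *
        ((Polynomial.X - 1) ^ (i - 1) * Polynomial.X ^ (l + 1) - (Polynomial.X - 1) ^ i * Polynomial.X ^ l)) := by
      simp only [T', T, if_pos hik, Nat.add_sub_cancel_left, Polynomial.C_mul]
      ring
    have hTs : T' (i + 1) = Polynomial.C (c i) * (Polynomial.C ((l : ℝ) * (l + b)) *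
        ((Polynomial.X - 1) ^ i * Polynomial.X ^ l - (Polynomial.X - 1) ^ (i + 1) * Polynomial.X ^ (l - 1))) := by
      rcases l with _ | l
      · simp [T']
      · have h1 : i + 1 ≤ i + (l + 1) := by omega
        have h2 : i + (l + 1) - (i + 1) = l := by omega
        have h3 : i + (l + 1) - i = l + 1 := by omega
        have hcc : c (i + 1) * (((i + 1 : ℕ) : ℝ) * ((i + 1 : ℕ) + 1)) =
            c i * (((l + 1 : ℕ) : ℝ) * ((l + 1 : ℕ) + b)) := by
          simp only [hc, h2, h3]
          have g1 := genBinom_succ (((i + (l + 1) : ℕ) : ℝ) + 1) l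
          have g2 := genBinom_succ (((i + (l + 1) : ℕ) : ℝ) + b) i
          push_cast at g1 g2 ⊢
          generalize genBinom ((i : ℝ) + (l + 1) + 1) (l + 1) = u1 at *
          generalize genBinom ((i : ℝ) + (l + 1) + 1) l = u0 at *
          generalize genBinom ((i : ℝ) + (l + 1) + b) (i + 1) = w1 at *
          generalize genBinom ((i : ℝ) + (l + 1) + b) i = w0 at *
          linear_combination u0 * ((i:ℝ) + 2) * g2 - w0 * (l + 1 + b) * g1
        simp only [T', T, if_pos h1, h2, hcc, Nat.add_sub_cancel]
        simp only [Polynomial.C_mul]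
        ring
    rw [hTi, hTs]
    simp only [Polynomial.C_mul, Polynomial.C_neg, Polynomial.C_add, Polynomial.C_1, Nat.cast_add] at hb ⊢
    linear_combination Polynomial.C (c i) * hb
  rw [Finset.sum_congr rfl hT, Finset.sum_range_sub]
  simp [T', T]

/-- The Laplacian of a radial polynomial times a harmonic homogeneous polynomial. -/
theorem lap_radial {d m : ℕ} (b : ℝ) (hb : b = m + ((d : ℝ) - 2) / 2)
    {Y : MvPolynomial (Fin d) ℝ}
    (hY : Y.IsHomogeneous m) (hH : mvLaplacian Y = 0) (q : Polynomial ℝ) :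
    mvLaplacian (Polynomial.aeval (sumSq d) q * Y) =
      C 4 * (Polynomial.aeval (sumSq d) (Lop b q) * Y) := by
  have hS : ∀ i, pderiv i (sumSq d) = 2 * X i := by
    intro i
    simp only [sumSq, map_sum, Derivation.leibniz_pow, pderiv_X]
    rw [Finset.sum_eq_single i]
    · simp
    · intro j _ hj; simp [Pi.single_apply, hj.symm]
    · simp
  have hE := hY.sum_X_mul_pderiv
  have h1 : ∀ i, pderiv i (pderiv i (Polynomial.aeval (sumSq d) q * Y)) =
      4 * Polynomial.aeval (sumSq d) (Polynomial.derivative (Polynomial.derivative q)) * Y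
        * (X i ^ 2) +
      2 * Polynomial.aeval (sumSq d) (Polynomial.derivative q) * Y +
      4 * Polynomial.aeval (sumSq d) (Polynomial.derivative q) * (X i * pderiv i Y) +
      Polynomial.aeval (sumSq d) q * pderiv i (pderiv i Y) := by
    intro i
    have h2 : pderiv i (2 : MvPolynomial (Fin d) ℝ) = 0 := by
      rw [show (2 : MvPolynomial (Fin d) ℝ) = C 2 from (map_ofNat C 2).symm, pderiv_C]
    simp only [Derivation.leibniz, Derivation.map_aeval, hS, map_add, smul_eq_mul, h2,
      pderiv_X_self]
    ring
  unfold mvLaplacian at *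
  simp only [h1, Finset.sum_add_distrib, ← Finset.mul_sum, hH, hE]
  rw [show (∑ i : Fin d, (X i : MvPolynomial (Fin d) ℝ) ^ 2) = sumSq d from rfl]
  simp only [Lop, map_add, map_mul, Polynomial.aeval_X, Polynomial.aeval_C, algebraMap_eq]
  have h4 : (C 4 * (C b + C 1) : MvPolynomial (Fin d) ℝ) = 4 * (m : MvPolynomial (Fin d) ℝ) + 2 * (d : MvPolynomial (Fin d) ℝ) := by
    rw [← C_add, ← C_mul, hb, show (4 : ℝ) * (m + ((d : ℝ) - 2) / 2 + 1) = 4 * m + 2 * d by ring]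
    simp only [map_add, map_mul, map_natCast, map_ofNat]
  have h44 : (C 4 : MvPolynomial (Fin d) ℝ) = 4 := map_ofNat C 4
  simp only [Finset.sum_const, Finset.card_univ, Fintype.card_fin, nsmul_eq_mul]
  linear_combination (-Polynomial.aeval (sumSq d) (Polynomial.derivative q) * Y) * h4 - sumSq d * Polynomial.aeval (sumSq d) (Polynomial.derivative (Polynomial.derivative q)) * Y * h44

theorem pEval_mul {d : ℕ} (p q : MvPolynomial (Fin d) ℝ) (x : Edim d) :
    pEval (p * q) x = pEval p x * pEval q x := by simp [pEval]

theorem pEval_one_sub {d : ℕ} (x : Edim d) : pEval (1 - sumSq d) x = 1 - ‖x‖ ^ 2 := by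
  simp [pEval, sumSq, EuclideanSpace.real_norm_sq_eq]

theorem U_lap {d k : ℕ} (j : ℕ) (b : ℝ) (hb : b = k + ((d : ℝ) - 2) / 2)
    {Y : MvPolynomial (Fin d) ℝ} (hY : Y.IsHomogeneous k) (hH : mvLaplacian Y = 0) :
    mvLaplacian ((1 - sumSq d) *
      (Polynomial.aeval (2 * sumSq d - 1) (jacobiPoly j 1 b) * Y)) =
    C (-(4 * (((j : ℝ) + 1) * (j + 1 + b)))) *
      (Polynomial.aeval (2 * sumSq d - 1) (jacobiPoly j 1 b) * Y) := by
  have h1 : Polynomial.aeval (sumSq d) ((jacobiPoly j 1 b).comp (2 * Polynomial.X - 1)) =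
      Polynomial.aeval (2 * sumSq d - 1) (jacobiPoly j 1 b) := by
    rw [Polynomial.aeval_comp]
    congr 2
    rw [map_sub, map_mul, Polynomial.aeval_X, map_one, map_ofNat]
  have h2 := lap_radial b hb hY hH
    ((1 - Polynomial.X) * (jacobiPoly j 1 b).comp (2 * Polynomial.X - 1))
  rw [jacobi_ode] at h2
  simp only [map_mul, h1, map_sub, map_one, Polynomial.aeval_X, Polynomial.aeval_C,
    algebraMap_eq] at h2
  rw [← mul_assoc, h2, ← mul_assoc, ← mul_assoc, ← mul_assoc]
  congr 2
  simp only [map_neg, map_mul]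
  ring

theorem innerI_eq {d : ℕ} (lam : ℝ) {f : Edim d → ℝ}
    (hf : ContDiffOn ℝ 1 f (closedBall (0 : Edim d) 1))
    (h0 : ∀ x ∈ sphere (0 : Edim d) 1, f x = 0) (p : MvPolynomial (Fin d) ℝ) :
    innerI d lam f (pEval p) = -(lam / omegaD d) *
      ∫ x in closedBall (0 : Edim d) 1, f x * pEval (mvLaplacian p) x := by
  unfold innerI
  have : ∀ y : sphere (0 : Edim d) 1, f y * pEval p y = 0 := fun y => by simp [h0 y y.2]
  simp only [this, integral_zero, mul_zero, add_zero]
  rw [green hf h0]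
  ring

theorem term_eq {d : ℕ} {lam om K c : ℝ} (hlam : 0 < lam) (hom : om = omegaD d) (hom0 : om ≠ 0)
    (hK : K ≠ 0) (hc : c ≠ 0)
    {f g : Edim d → ℝ} (hg : ContDiffOn ℝ 1 g (closedBall (0 : Edim d) 1))
    (hfg : ∀ x : Edim d, f x = (1 - ‖x‖ ^ 2) * g x)
    (P : MvPolynomial (Fin d) ℝ) (hP : mvLaplacian ((1 - sumSq d) * P) = C (-c) * P)
    (x : Edim d) :
    innerI d lam f (pEval ((1 - sumSq d) * P)) /
        innerI d lam (pEval ((1 - sumSq d) * P)) (pEval ((1 - sumSq d) * P)) *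
      pEval ((1 - sumSq d) * P) x =
    (1 - ‖x‖ ^ 2) * (K * ∫ y in closedBall (0 : Edim d) 1, g y * (pEval P x * pEval P y /
      (K * ∫ z in closedBall (0 : Edim d) 1, (pEval P z) ^ 2 * (1 - ‖z‖ ^ 2))) *
        (1 - ‖y‖ ^ 2)) := by
  have hCf : ContDiffOn ℝ 1 f (closedBall (0 : Edim d) 1) := by
    have : f = fun x => pEval (1 - sumSq d) x * g x := by
      ext y; rw [hfg, pEval_one_sub]
    rw [this]
    exact (pEval_contDiff _).contDiffOn.mul hg
  have e1 : innerI d lam f (pEval ((1 - sumSq d) * P)) = (lam * c / om) *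
      ∫ y in closedBall (0 : Edim d) 1, g y * pEval P y * (1 - ‖y‖ ^ 2) := by
    rw [innerI_eq lam hCf (fun y hy => by
      rw [hfg]; simp at hy; simp [hy]), hP, ← integral_const_mul, ← integral_const_mul, ← hom]
    refine integral_congr_ae (.of_forall fun y => ?_)
    simp only [pEval_mul, hfg]
    simp only [pEval, eval_C]
    ring
  have e2 : innerI d lam (pEval ((1 - sumSq d) * P)) (pEval ((1 - sumSq d) * P)) =
      (lam * c / om) *
      ∫ y in closedBall (0 : Edim d) 1, (pEval P y) ^ 2 * (1 - ‖y‖ ^ 2) := by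
    rw [innerI_eq lam (pEval_contDiff _).contDiffOn (fun y hy => by
      rw [pEval_mul, pEval_one_sub]; simp at hy; simp [hy]), hP, ← integral_const_mul,
      ← integral_const_mul, ← hom]
    refine integral_congr_ae (.of_forall fun y => ?_)
    simp only [pEval_mul, pEval_one_sub]
    simp only [pEval, eval_C]
    ring
  rw [e1, e2]
  clear e1 e2
  set H := ∫ z in closedBall (0 : Edim d) 1, (pEval P z) ^ 2 * (1 - ‖z‖ ^ 2)
  have e3 : ∫ y in closedBall (0 : Edim d) 1, g y * (pEval P x * pEval P y / (K * H)) *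
      (1 - ‖y‖ ^ 2) = (pEval P x / (K * H)) *
      ∫ y in closedBall (0 : Edim d) 1, g y * pEval P y * (1 - ‖y‖ ^ 2) := by
    rw [← integral_const_mul (pEval P x / (K * H))]
    refine integral_congr_ae (.of_forall fun y => ?_)
    simp only
    ring
  rw [e3, pEval_mul, pEval_one_sub]
  by_cases hH : H = 0
  · simp [hH]
  · have := hlam.ne'
    field_simp

theorem omegaD_pos {d : ℕ} (hd : 2 ≤ d) : 0 < omegaD d := by
  unfold omegaD
  have hd' : (0 : ℝ) < d := by exact_mod_cast (by omega : 0 < d)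
  have := Real.Gamma_pos_of_pos (s := (d : ℝ) / 2) (by positivity)
  have := Real.pi_pos
  positivity

/-- if `f(x) = (1-‖x‖²)g(x)` then
`proj_{V_n^d(I)} f(x) = (1-‖x‖²)·proj_{V_{n-2}^d(W₁)} g(x)`. -/
theorem stmt16 (d : ℕ) (hd : 2 ≤ d) (lam : ℝ) (hlam : 0 < lam)
    (Y : (m : ℕ) → Fin (sigmaDim d m) → MvPolynomial (Fin d) ℝ)
    (hYhom : ∀ m ν, (Y m ν).IsHomogeneous m)
    (hYharm : ∀ m ν, mvLaplacian (Y m ν) = 0)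
    (hYon : ∀ (m k : ℕ) (ν : Fin (sigmaDim d m)) (μ : Fin (sigmaDim d k)),
      (1 / omegaD d) * ∫ y : sphere (0 : Edim d) 1,
          pEval (Y m ν) y * pEval (Y k μ) y ∂(sphMeasure d) =
        if m = k ∧ (ν : ℕ) = (μ : ℕ) then 1 else 0)
    (g : Edim d → ℝ) (hg : ContDiffOn ℝ 1 g (closedBall (0 : Edim d) 1))
    (f : Edim d → ℝ) (hfg : ∀ x : Edim d, f x = (1 - ‖x‖ ^ 2) * g x)
    (n : ℕ) (hn : 2 ≤ n) (x : Edim d) (hx : x ∈ closedBall (0 : Edim d) 1) :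
    projI d lam Y n f x =
      (1 - ‖x‖ ^ 2) *
        (((d : ℝ) * ((d : ℝ) / 2 + 1) / omegaD d) *
          ∫ y in closedBall (0 : Edim d) 1,
            g y * kernW1 d Y (n - 2) x y * (1 - ‖y‖ ^ 2)) := by
  obtain ⟨m, rfl⟩ : ∃ m, n = m + 2 := ⟨n - 2, by omega⟩
  have hom := omegaD_pos hd
  have hd' : (2 : ℝ) ≤ d := by exact_mod_cast hd
  have hCf : ContDiffOn ℝ 1 f (closedBall (0 : Edim d) 1) := by
    have : f = fun x => pEval (1 - sumSq d) x * g x := by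
      ext y; rw [hfg, pEval_one_sub]
    rw [this]
    exact (pEval_contDiff _).contDiffOn.mul hg
  have hf0 : ∀ y ∈ sphere (0 : Edim d) 1, f y = 0 := fun y hy => by
    rw [hfg]; simp at hy; simp [hy]
  set K : ℝ := (d : ℝ) * ((d : ℝ) / 2 + 1) / omegaD d with hK
  have hK0 : K ≠ 0 := by positivity
  have hR : (∫ y in closedBall (0 : Edim d) 1, g y * kernW1 d Y m x y * (1 - ‖y‖ ^ 2)) =
      ∑ j ∈ Finset.range (m / 2 + 1), ∑ ν : Fin (sigmaDim d (m - 2 * j)),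
        ∫ y in closedBall (0 : Edim d) 1, g y * (pEval (PW1 d Y m j ν) x * pEval (PW1 d Y m j ν) y /
          (K * ∫ z in closedBall (0 : Edim d) 1, (pEval (PW1 d Y m j ν) z) ^ 2 * (1 - ‖z‖ ^ 2))) *
          (1 - ‖y‖ ^ 2) := by
    have hi : ∀ (j : ℕ) (ν : Fin (sigmaDim d (m - 2 * j))), Integrable (fun y : Edim d =>
        g y * (pEval (PW1 d Y m j ν) x * pEval (PW1 d Y m j ν) y /
          (K * ∫ z in closedBall (0 : Edim d) 1, (pEval (PW1 d Y m j ν) z) ^ 2 * (1 - ‖z‖ ^ 2))) *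
          (1 - ‖y‖ ^ 2)) (volume.restrict (closedBall (0 : Edim d) 1)) := by
      intro j ν
      have hg' := hg.continuousOn
      have hp := (pEval_contDiff (PW1 d Y m j ν)).continuous.continuousOn
        (s := closedBall (0 : Edim d) 1)
      refine ContinuousOn.integrableOn_compact (isCompact_closedBall _ _) ?_
      refine (hg'.mul ((continuousOn_const.mul hp).div_const _)).mul ?_
      fun_prop
    have hi2 : ∀ (j : ℕ), Integrable (fun y : Edim d => ∑ ν : Fin (sigmaDim d (m - 2 * j)),
        g y * (pEval (PW1 d Y m j ν) x * pEval (PW1 d Y m j ν) y /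
          (K * ∫ z in closedBall (0 : Edim d) 1, (pEval (PW1 d Y m j ν) z) ^ 2 * (1 - ‖z‖ ^ 2))) *
          (1 - ‖y‖ ^ 2)) (volume.restrict (closedBall (0 : Edim d) 1)) :=
      fun j => integrable_finsetSum _ fun ν _ => hi j ν
    simp_rw [kernW1, Finset.mul_sum, Finset.sum_mul]
    rw [integral_finsetSum _ (fun j _ => hi2 j)]
    refine Finset.sum_congr rfl fun j _ => ?_
    rw [integral_finsetSum _ (fun ν _ => hi j ν)]
  rw [Nat.add_sub_cancel, hR, projI, show (m + 2) / 2 + 1 = (m / 2 + 1) + 1 by omega,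
    Finset.sum_range_succ']
  have hz : (∑ ν : Fin (sigmaDim d (m + 2 - 2 * 0)),
      innerI d lam f (pEval (Upoly d Y (m + 2) 0 ν)) /
        innerI d lam (pEval (Upoly d Y (m + 2) 0 ν)) (pEval (Upoly d Y (m + 2) 0 ν)) *
      pEval (Upoly d Y (m + 2) 0 ν) x) = 0 := by
    refine Finset.sum_eq_zero fun ν _ => ?_
    rw [innerI_eq lam hCf hf0]
    have : mvLaplacian (Upoly d Y (m + 2) 0 ν) = 0 := by
      unfold Upoly
      rw [if_pos rfl]
      exact hYharm _ _
    rw [this]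
    simp [pEval]
  rw [hz, add_zero, Finset.mul_sum, Finset.mul_sum]
  refine Finset.sum_congr rfl fun j hj => ?_
  have hjm : 2 * j ≤ m := by
    have := Finset.mem_range.1 hj
    omega
  rw [Finset.mul_sum, Finset.mul_sum]
  let b : ℝ := (m : ℝ) - 2 * (j : ℝ) + ((d : ℝ) - 2) / 2
  have hb1 : (((m + 2 : ℕ) : ℝ)) - 2 * ((j + 1 : ℕ) : ℝ) + ((d : ℝ) - 2) / 2 = b := by
    simp only [b]; push_cast; ring
  let J : MvPolynomial (Fin d) ℝ := Polynomial.aeval (2 * sumSq d - 1) (jacobiPoly j 1 b)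
  let T : (k : ℕ) → Fin (sigmaDim d k) → ℝ := fun k ν =>
    innerI d lam f (pEval ((1 - sumSq d) * (J * Y k ν))) /
        innerI d lam (pEval ((1 - sumSq d) * (J * Y k ν))) (pEval ((1 - sumSq d) * (J * Y k ν))) *
      pEval ((1 - sumSq d) * (J * Y k ν)) x
  have hU : ∀ ν, Upoly d Y (m + 2) (j + 1) ν =
      (1 - sumSq d) * (J * Y (m + 2 - 2 * (j + 1)) ν) := by
    intro ν
    unfold Upoly
    rw [if_neg (Nat.succ_ne_zero j), hb1, mul_assoc, Nat.add_sub_cancel]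
  have hL : (∑ ν : Fin (sigmaDim d (m + 2 - 2 * (j + 1))),
      innerI d lam f (pEval (Upoly d Y (m + 2) (j + 1) ν)) /
        innerI d lam (pEval (Upoly d Y (m + 2) (j + 1) ν))
          (pEval (Upoly d Y (m + 2) (j + 1) ν)) *
      pEval (Upoly d Y (m + 2) (j + 1) ν) x) = ∑ ν, T (m + 2 - 2 * (j + 1)) ν := by
    refine Finset.sum_congr rfl fun ν _ => ?_
    rw [hU]
  rw [hL, show m + 2 - 2 * (j + 1) = m - 2 * j by omega]
  refine Finset.sum_congr rfl fun ν _ => ?_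
  have hbk : b = ((m - 2 * j : ℕ) : ℝ) + ((d : ℝ) - 2) / 2 := by
    simp only [b]
    rw [Nat.cast_sub hjm]
    push_cast
    ring
  have hb0 : 0 ≤ b := by
    rw [hbk]
    have : 0 ≤ ((d : ℝ) - 2) / 2 := by linarith
    positivity
  have hc : 4 * (((j : ℝ) + 1) * (j + 1 + b)) ≠ 0 := by positivity
  exact term_eq hlam rfl hom.ne' hK0 hc hg hfg (J * Y (m - 2 * j) ν)
    (U_lap j b hbk (hYhom _ _) (hYharm _ _)) x
end
end

section
/- Define ⟨f,g⟩_Δ := (1/π)∫_{B^d} Δ[(1−‖x‖²)f(x)]·Δ[(1−‖x‖²)g(x)] dx on polynomials in d variables. Define Q_{0,ν}^n(x) := Y_ν^n(x) and, for 1 ≤ j ≤ n/2, Q_{j,ν}^n(x) := (1−‖x‖²)·P_{j−1}^{(2, n−2j+(d−2)/2)}(2‖x‖²−1)·Y_ν^{n−2j}(x). Then the family {Q_{j,ν}^n} is mutually orthogonal with respect to ⟨·,·⟩_Δ: for any two distinct index triples (n,j,ν) ≠ (m,l,μ) with 0 ≤ 2j ≤ n, 1 ≤ ν ≤ σ_{n−2j},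 0 ≤ 2l ≤ m, 1 ≤ μ ≤ σ_{m−2l}, one has ⟨Q_{j,ν}^n, Q_{l,μ}^m⟩_Δ = 0. -/
open MeasureTheory Metric MvPolynomial RealInnerProductSpace

noncomputable section

/-- The inner product `⟨f,g⟩_Δ = (1/π) ∫_{B^d} Δ[(1-‖x‖²)f(x)] Δ[(1-‖x‖²)g(x)] dx`. -/
def innerDelta (d : ℕ) (f g : MvPolynomial (Fin d) ℝ) : ℝ :=
  (1 / Real.pi) * ∫ x in closedBall (0 : Edim d) 1,
    pEval (mvLaplacian ((1 - sumSq d) * f)) x * pEval (mvLaplacian ((1 - sumSq d) * g)) x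

/-- The polynomials `Q_{j,ν}^n`: `Q_{0,ν}^n = Y_ν^n` and, for `j ≥ 1`,
`Q_{j,ν}^n(x) = (1-‖x‖²) P_{j-1}^{(2, n-2j+(d-2)/2)}(2‖x‖²-1) Y_ν^{n-2j}(x)`. -/
def Qpoly (d : ℕ) (Y : (m : ℕ) → Fin (sigmaDim d m) → MvPolynomial (Fin d) ℝ)
    (n j : ℕ) (ν : Fin (sigmaDim d (n - 2 * j))) : MvPolynomial (Fin d) ℝ :=
  if j = 0 then Y (n - 2 * j) ν
  else (1 - sumSq d) *
      Polynomial.aeval (2 * sumSq d - 1)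
        (jacobiPoly (j - 1) 2 ((n : ℝ) - 2 * (j : ℝ) + ((d : ℝ) - 2) / 2)) *
      Y (n - 2 * j) ν


/-! ### Algebraic part: moment functional, Rodrigues formula -/

section JacobiAlg
open Polynomial

/-- The functional `p ↦ ∫₀¹ ρ^b p(ρ) dρ`, defined algebraically. -/
def momL (b : ℝ) : Polynomial ℝ →ₗ[ℝ] ℝ :=
  Polynomial.lsum fun i => (1 / (b + i + 1)) • (LinearMap.id : ℝ →ₗ[ℝ] ℝ)

lemma momL_monomial (b : ℝ) (i : ℕ) (a : ℝ) :
    momL b (Polynomial.monomial i a) = a / (b + i + 1) := by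
  simp [momL, Polynomial.lsum_apply, div_eq_inv_mul]

lemma momL_D (b : ℝ) (hb : -1 < b) (f : Polynomial ℝ) :
    momL b (Polynomial.X * derivative f + Polynomial.C (b + 1) * f) = f.eval 1 := by
  induction f using Polynomial.induction_on' with
  | add p q hp hq =>
    rw [Polynomial.eval_add, ← hp, ← hq, ← map_add]
    congr 1
    simp; ring
  | monomial i a =>
    have h : Polynomial.X * derivative (Polynomial.monomial i a)
        = Polynomial.monomial i (a * i) := by
      rcases i with _ | i
      · simp
      · rw [derivative_monomial, Polynomial.X_mul_monomial]; simp
    rw [h, Polynomial.C_mul_monomial, map_add, momL_monomial, momL_monomial]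
    have : b + i + 1 ≠ 0 := by
      have : (0:ℝ) ≤ i := Nat.cast_nonneg i
      linarith
    simp
    field_simp
    ring

lemma momL_X (b : ℝ) (f : Polynomial ℝ) :
    momL b (Polynomial.X * f) = momL (b + 1) f := by
  induction f using Polynomial.induction_on' with
  | add p q hp hq => rw [mul_add, map_add, map_add, hp, hq]
  | monomial i a =>
    rw [Polynomial.X_mul_monomial, momL_monomial, momL_monomial]
    push_cast
    ring_nf

lemma momL_parts (b : ℝ) (hb : -1 < b) (f q : Polynomial ℝ) :
    momL b ((Polynomial.X * derivative f + Polynomial.C (b + 1) * f) * q)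
      = f.eval 1 * q.eval 1 - momL (b + 1) (f * derivative q) := by
  have h := momL_D b hb (f * q)
  rw [Polynomial.eval_mul] at h
  rw [← h, ← momL_X, ← map_sub]
  congr 1
  rw [derivative_mul]
  ring

/-- The radial operator `f ↦ X f'' + (b+1) f'`. -/
def radE (b : ℝ) (f : Polynomial ℝ) : Polynomial ℝ :=
  Polynomial.X * derivative (derivative f) + Polynomial.C (b + 1) * derivative f

lemma momL_radE (b : ℝ) (hb : -1 < b) (f q : Polynomial ℝ) (h0 : f.eval 1 = 0)
    (h1 : (derivative f).eval 1 = 0) :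
    momL b (radE b f * q) = momL b (f * radE b q) := by
  have e1 := momL_parts b hb (derivative f) q
  have e2 := momL_parts b hb (derivative q) f
  rw [h1] at e1
  rw [h0] at e2
  unfold radE
  rw [e1, mul_comm f, e2, mul_comm (derivative f)]
  ring

lemma iter_radE (b : ℝ) (q : Polynomial ℝ) (m : ℕ) (h : derivative^[m + 1] q = 0) :
    derivative^[m] (radE b q) = 0 := by
  have h2 : derivative^[m + 2] q = 0 := by
    rw [Function.iterate_succ_apply', h]; simp
  unfold radE
  rw [iterate_map_add, mul_comm Polynomial.X, iterate_derivative_derivative_mul_X,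
    iterate_derivative_C_mul, ← Function.iterate_succ_apply, ← Function.iterate_succ_apply,
    show m.succ = m + 1 from rfl, h, show (m + 1).succ = m + 2 from rfl, h2]
  simp

/-- Falling factorial. -/
def ffact (B : ℝ) (i : ℕ) : ℝ := ∏ t ∈ Finset.range i, (B - t)

/-- `d^i/dρ^i [ρ^B R₀] = ρ^(B-i) rodR i`. -/
def rodR (B : ℝ) (R0 : Polynomial ℝ) : ℕ → Polynomial ℝ
  | 0 => R0
  | i + 1 => Polynomial.X * derivative (rodR B R0 i) + Polynomial.C (B - i) * rodR B R0 i

lemma rodR_closed (B : ℝ) (R0 : Polynomial ℝ) (i : ℕ) :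
    rodR B R0 i = ∑ s ∈ Finset.range (i + 1),
      Polynomial.C ((i.choose s : ℝ) * ffact B (i - s)) *
        (Polynomial.X ^ s * derivative^[s] R0) := by
  induction i with
  | zero => simp [rodR, ffact]
  | succ i ih =>
    set T : ℕ → Polynomial ℝ := fun s => Polynomial.X ^ s * derivative^[s] R0 with hT
    have hTd : ∀ s, Polynomial.X * derivative (T s) = Polynomial.C (s : ℝ) * T s + T (s + 1) := by
      intro s
      simp only [hT, derivative_mul, Function.iterate_succ_apply', derivative_X_pow]
      rcases s with _ | s
      · simp
      · simp [pow_succ]; ring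
    have h1 : rodR B R0 (i + 1) = ∑ s ∈ Finset.range (i + 1),
        (Polynomial.C ((i.choose s : ℝ) * ffact B (i - s)) * T (s + 1)
          + Polynomial.C ((i.choose s : ℝ) * ffact B (i + 1 - s)) * T s) := by
      rw [rodR, ih, derivative_sum, Finset.mul_sum, Finset.mul_sum, ← Finset.sum_add_distrib]
      apply Finset.sum_congr rfl
      intro s hs
      have hs' : s ≤ i := by simp at hs; omega
      have hf : ffact B (i + 1 - s) = ffact B (i - s) * (B - ((i : ℝ) - s)) := by
        rw [Nat.sub_add_comm hs', ffact, Finset.prod_range_succ, ← ffact, Nat.cast_sub hs']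
      rw [derivative_C_mul]
      change Polynomial.X * (_ * derivative (T s)) + _ * (_ * T s) = _
      rw [mul_left_comm, hTd, hf]
      simp only [map_mul, map_sub]
      ring
    rw [h1, Finset.sum_add_distrib]
    change _ = ∑ s ∈ Finset.range (i + 1 + 1), _ * T s
    rw [Finset.sum_range_succ' _ (i + 1)]
    have h2 : ∑ s ∈ Finset.range (i + 1),
        Polynomial.C ((i.choose s : ℝ) * ffact B (i + 1 - s)) * T s
        = ∑ s ∈ Finset.range (i + 1),
        Polynomial.C ((i.choose (s + 1) : ℝ) * ffact B (i - s)) * T (s + 1)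
          + Polynomial.C (ffact B (i + 1)) * T 0 := by
      have h3 := Finset.sum_range_succ (fun s => 
        Polynomial.C ((i.choose s : ℝ) * ffact B (i + 1 - s)) * T s) (i + 1)
      rw [Finset.sum_range_succ'] at h3
      simp only [Nat.choose_succ_self, Nat.cast_zero, zero_mul, map_zero, add_zero] at h3
      rw [← h3]
      simp
    rw [h2, ← add_assoc, ← Finset.sum_add_distrib]
    congr 1
    · apply Finset.sum_congr rfl
      intro s hs
      rw [Nat.choose_succ_succ, Nat.add_sub_add_right]
      push_cast
      simp only [map_mul, map_add]
      ring
    · simp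

lemma rodR_eval_one (B : ℝ) (n i : ℕ) (hi : i ≤ n) :
    (rodR B ((Polynomial.X - Polynomial.C 1) ^ (n + 2)) i).eval 1 = 0 := by
  rw [rodR_closed, Polynomial.eval_finsetSum]
  apply Finset.sum_eq_zero
  intro s hs
  have hs' : s ≤ i := by simp at hs; omega
  rw [iterate_derivative_X_sub_pow]
  have : n + 2 - s ≠ 0 := by omega
  simp [this]

lemma rodR_orth (b : ℝ) (hb : -1 < b) (n i : ℕ) (hi : i ≤ n) (q : Polynomial ℝ)
    (hq : derivative^[i] q = 0) :
    momL (n + b - i) (rodR (n + b) ((Polynomial.X - Polynomial.C 1) ^ (n + 2)) i * q) = 0 := by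
  induction i generalizing q with
  | zero => simp at hq; simp [hq]
  | succ i ih =>
    have hc : ((i : ℝ) + 1) ≤ n := by exact_mod_cast hi
    have e := momL_parts (n + b - (i + 1)) (by linarith)
      (rodR (n + b) ((Polynomial.X - Polynomial.C 1) ^ (n + 2)) i) q
    rw [rodR_eval_one _ _ _ (by omega), show (n : ℝ) + b - (i + 1) + 1 = n + b - i by ring,
      ih (by omega) (derivative q) (by rw [← Function.iterate_succ_apply]; exact hq)] at e
    rw [rodR]
    push_cast
    rw [e]; simp

lemma jacobi_rod (n : ℕ) (b : ℝ) :
    Polynomial.C (n.factorial : ℝ) * ((1 - Polynomial.X) ^ 2 *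
        (jacobiPoly n 2 b).comp (2 * Polynomial.X - 1))
      = rodR (n + b) ((Polynomial.X - Polynomial.C 1) ^ (n + 2)) n := by
  rw [rodR_closed, ← Finset.sum_range_reflect, jacobiPoly, Polynomial.sum_comp,
    Finset.mul_sum, Finset.mul_sum]
  apply Finset.sum_congr rfl
  intro s hs
  have hs' : s ≤ n := by simp at hs; omega
  rw [iterate_derivative_X_sub_pow]
  obtain ⟨t, rfl⟩ := Nat.exists_eq_add_of_le hs'
  have e1 : s + t + 1 - 1 - s = t := by omega
  have e2 : s + t - t = s := by omega
  have e3 : s + t - s = t := by omega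
  have e4 : s + t + 2 - t = s + 2 := by omega
  rw [e1, e2, e3, e4]
  have hC : (Polynomial.C (2⁻¹ : ℝ)) * 2 = 1 := by
    rw [show (2 : Polynomial ℝ) = Polynomial.C 2 from (map_ofNat (Polynomial.C : ℝ →+* Polynomial ℝ) 2).symm,
      ← Polynomial.C_mul]; norm_num
  have hm : Polynomial.C (2⁻¹ : ℝ) * (2 * Polynomial.X - 1 - 1) = Polynomial.X - 1 := by
    linear_combination (Polynomial.X - 1) * hC
  have hp : Polynomial.C (2⁻¹ : ℝ) * (2 * Polynomial.X - 1 + 1) = Polynomial.X := by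
    linear_combination Polynomial.X * hC
  have hcf : ((s + t).factorial : ℝ) * (genBinom (((s + t : ℕ) : ℝ) + 2) t
        * genBinom (((s + t : ℕ) : ℝ) + b) s)
      = ((s + t).choose t : ℝ) * ffact (((s + t : ℕ) : ℝ) + b) s
        * ((s + t + 2).descFactorial t : ℝ) := by
    have hd : ((s + t + 2).descFactorial t : ℝ)
        = ∏ i ∈ Finset.range t, ((((s + t : ℕ) : ℝ) + 2) - i) := by
      rw [Nat.descFactorial_eq_prod_range]
      push_cast
      apply Finset.prod_congr rfl
      intro i hi
      have : i ≤ s + t + 2 := by simp at hi; omega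
      rw [Nat.cast_sub this]; push_cast; ring
    have hch : ((s + t).choose t : ℝ) * (s.factorial * t.factorial) = (s + t).factorial := by
      have := Nat.choose_mul_factorial_mul_factorial (show t ≤ s + t by omega)
      rw [e2] at this
      rw [← this]; push_cast; ring
    rw [hd, ← hch, genBinom, genBinom, ffact]
    have := s.factorial_ne_zero
    have := t.factorial_ne_zero
    field_simp
  simp only [Polynomial.mul_comp, Polynomial.pow_comp, Polynomial.C_comp, Polynomial.sub_comp,
    Polynomial.add_comp, Polynomial.X_comp, Polynomial.one_comp, hm, hp]
  have hcf' := congrArg Polynomial.C hcf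
  simp only [map_mul] at hcf' ⊢
  rw [nsmul_eq_mul, ← Polynomial.C_eq_natCast, map_one]
  linear_combination ((1 - Polynomial.X) ^ 2 * (Polynomial.X - 1) ^ s * Polynomial.X ^ t) * hcf'

/-- Radial part of `(1-‖x‖²) Q`. -/
def Frad (b : ℝ) (j : ℕ) : Polynomial ℝ :=
  if j = 0 then 1 - Polynomial.X
  else (1 - Polynomial.X) ^ 2 * (jacobiPoly (j - 1) 2 b).comp (2 * Polynomial.X - 1)

lemma jacobi_natDegree (n : ℕ) (a b : ℝ) : (jacobiPoly n a b).natDegree ≤ n := by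
  unfold jacobiPoly
  apply Polynomial.natDegree_sum_le_of_forall_le
  intro s hs
  have hs' : s ≤ n := by simp at hs; omega
  have h1 : (Polynomial.C (2⁻¹ : ℝ) * (Polynomial.X - 1)).natDegree ≤ 1 := by compute_degree
  have h2 : (Polynomial.C (2⁻¹ : ℝ) * (Polynomial.X + 1)).natDegree ≤ 1 := by compute_degree
  refine (Polynomial.natDegree_mul_le_of_le (Polynomial.natDegree_mul_le_of_le
    (Polynomial.natDegree_C _).le (Polynomial.natDegree_pow_le_of_le s h1))
    (Polynomial.natDegree_pow_le_of_le (n - s) h2)).trans ?_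
  omega

lemma Frad_natDegree (b : ℝ) (j : ℕ) : (Frad b j).natDegree ≤ j + 1 := by
  unfold Frad
  split_ifs with h
  · subst h
    compute_degree
  · have h1 : ((1 - Polynomial.X : Polynomial ℝ) ^ 2).natDegree ≤ 2 := by compute_degree
    have h3 : (2 * Polynomial.X - 1 : Polynomial ℝ).natDegree ≤ 1 := by compute_degree
    have h2 : ((jacobiPoly (j - 1) 2 b).comp (2 * Polynomial.X - 1)).natDegree ≤ j - 1 := by
      refine Polynomial.natDegree_comp_le.trans ?_
      calc _ ≤ (j - 1) * 1 := Nat.mul_le_mul (jacobi_natDegree _ _ _) h3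
        _ = _ := mul_one _
    refine (Polynomial.natDegree_mul_le_of_le h1 h2).trans ?_
    omega

lemma radial_orth_lt (b : ℝ) (hb : -1 < b) (j l : ℕ) (hlj : l < j) :
    momL b (radE b (Frad b j) * radE b (Frad b l)) = 0 := by
  obtain ⟨n, rfl⟩ : ∃ n, j = n + 1 := ⟨j - 1, by omega⟩
  have hF : Frad b (n + 1) = (1 - Polynomial.X) ^ 2 *
      (jacobiPoly n 2 b).comp (2 * Polynomial.X - 1) := by simp [Frad]
  rw [momL_radE b hb]
  · have hq : derivative^[n] (radE b (radE b (Frad b l))) = 0 := by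
      apply iter_radE
      apply iter_radE
      apply iterate_derivative_eq_zero
      have := Frad_natDegree b l
      omega
    have h := rodR_orth b hb n n le_rfl _ hq
    rw [← jacobi_rod, ← hF, add_sub_cancel_left, mul_assoc, ← Polynomial.smul_eq_C_mul,
      map_smul, smul_eq_mul] at h
    rcases mul_eq_zero.1 h with h | h
    · exact absurd h (by exact_mod_cast n.factorial_ne_zero)
    · exact h
  · rw [hF]; simp
  · rw [hF, derivative_mul]; simp [derivative_pow]

lemma radial_orth (b : ℝ) (hb : -1 < b) (j l : ℕ) (hlj : j ≠ l) :
    momL b (radE b (Frad b j) * radE b (Frad b l)) = 0 := by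
  rcases lt_or_gt_of_ne hlj with h | h
  · rw [mul_comm]; exact radial_orth_lt b hb l j h
  · exact radial_orth_lt b hb j l h

end JacobiAlg


/-! ### Laplacian part -/

lemma pderiv_sumSq (d : ℕ) (i : Fin d) : pderiv i (sumSq d) = 2 * X i := by
  classical
  unfold sumSq
  rw [map_sum, Finset.sum_eq_single i]
  · rw [pderiv_pow, pderiv_X_self]; simp
  · intro k _ hk
    rw [pderiv_pow, pderiv_X_of_ne hk]; simp
  · simp

lemma pderiv_aeval_sumSq (d : ℕ) (i : Fin d) (F : Polynomial ℝ) :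
    pderiv i (Polynomial.aeval (sumSq d) F)
      = Polynomial.aeval (sumSq d) (Polynomial.derivative F) * (2 * X i) := by
  rw [Derivation.map_aeval, pderiv_sumSq, smul_eq_mul]

lemma mvLaplacian_radial (d k : ℕ) (F : Polynomial ℝ) (Z : MvPolynomial (Fin d) ℝ)
    (hh : Z.IsHomogeneous k) (hz : mvLaplacian Z = 0) :
    mvLaplacian (Polynomial.aeval (sumSq d) F * Z)
      = Polynomial.aeval (sumSq d)
          (Polynomial.C 4 * radE ((k : ℝ) + ((d : ℝ) - 2) / 2) F) * Z := by
  have h1 : ∀ i : Fin d, pderiv i (pderiv i (Polynomial.aeval (sumSq d) F * Z))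
      = 4 * Polynomial.aeval (sumSq d) (Polynomial.derivative (Polynomial.derivative F)) * Z
            * X i ^ 2
        + 2 * Polynomial.aeval (sumSq d) (Polynomial.derivative F) * Z
        + 4 * Polynomial.aeval (sumSq d) (Polynomial.derivative F) * (X i * pderiv i Z)
        + Polynomial.aeval (sumSq d) F * pderiv i (pderiv i Z) := by
    intro i
    have h2 : pderiv i (2 : MvPolynomial (Fin d) ℝ) = 0 := by
      rw [show (2 : MvPolynomial (Fin d) ℝ) = C 2 from (map_ofNat (C : ℝ →+* MvPolynomial (Fin d) ℝ) 2).symm]; exact pderiv_C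
    simp only [pderiv_mul, pderiv_aeval_sumSq, map_add, pderiv_X_self, h2]
    ring
  have hE := hh.sum_X_mul_pderiv
  unfold mvLaplacian at hz ⊢
  simp only [h1, Finset.sum_add_distrib, ← Finset.mul_sum, hz, hE]
  rw [← sumSq]
  simp only [Finset.sum_const, Finset.card_univ, Fintype.card_fin, radE, map_mul, map_add,
    Polynomial.aeval_X, Polynomial.aeval_C, nsmul_eq_mul]
  have hc : (algebraMap ℝ (MvPolynomial (Fin d) ℝ)) 4
      * (algebraMap ℝ (MvPolynomial (Fin d) ℝ)) ((k : ℝ) + ((d : ℝ) - 2) / 2 + 1)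
      = 4 * (k : MvPolynomial (Fin d) ℝ) + 2 * (d : MvPolynomial (Fin d) ℝ) := by
    rw [← map_mul, show (4 : ℝ) * ((k : ℝ) + ((d : ℝ) - 2) / 2 + 1) = 4 * k + 2 * d by ring]
    simp only [map_add, map_mul, map_ofNat, map_natCast]
  have h4 : (algebraMap ℝ (MvPolynomial (Fin d) ℝ)) 4 = 4 := map_ofNat _ 4
  simp only [map_add, h4] at hc ⊢
  linear_combination (-(Polynomial.aeval (sumSq d) (Polynomial.derivative F)) * Z) * hc

lemma Qpoly_radial (d : ℕ) (Y : (m : ℕ) → Fin (sigmaDim d m) → MvPolynomial (Fin d) ℝ)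
    (n j : ℕ) (hjn : 2 * j ≤ n) (ν : Fin (sigmaDim d (n - 2 * j))) :
    (1 - sumSq d) * Qpoly d Y n j ν
      = Polynomial.aeval (sumSq d) (Frad (((n - 2 * j : ℕ) : ℝ) + ((d : ℝ) - 2) / 2) j)
          * Y (n - 2 * j) ν := by
  unfold Qpoly Frad
  split_ifs with h
  · simp
  · rw [map_mul, Polynomial.aeval_comp, Nat.cast_sub hjn]
    push_cast
    simp only [map_pow, map_sub, map_mul, map_one, Polynomial.aeval_X, map_ofNat]
    ring

/-! ### Polar coordinates -/

lemma pEval_smul {d k : ℕ} (Z : MvPolynomial (Fin d) ℝ) (hh : Z.IsHomogeneous k) (r : ℝ)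
    (x : Edim d) : pEval Z (r • x) = r ^ k * pEval Z x := by
  unfold pEval
  rw [eval_eq, eval_eq, Finset.mul_sum]
  apply Finset.sum_congr rfl
  intro s hs
  have := hh (mem_support_iff.1 hs)
  rw [← this]
  simp [mul_pow, Finset.prod_mul_distrib, Finsupp.weight_apply, Finsupp.sum,
    Finset.prod_pow_eq_pow_sum]
  ring

lemma pEval_radial {d : ℕ} (G : Polynomial ℝ) (Z : MvPolynomial (Fin d) ℝ) (x : Edim d) :
    pEval (Polynomial.aeval (sumSq d) G * Z) x = G.eval (‖x‖ ^ 2) * pEval Z x := by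
  unfold pEval
  rw [map_mul]
  congr 1
  rw [← MvPolynomial.coe_aeval_eq_eval, RingHom.coe_coe, ← Polynomial.aeval_algHom_apply]
  simp [sumSq, EuclideanSpace.norm_sq_eq]

lemma polar (d : ℕ) (hd : 2 ≤ d) (g : ℝ → ℝ) (A : Edim d → ℝ) (K : ℕ)
    (hA : ∀ (r : ℝ) (x : Edim d), A (r • x) = r ^ K * A x) :
    ∫ x in closedBall (0 : Edim d) 1, g ‖x‖ * A x
      = (∫ y : sphere (0 : Edim d) 1, A y ∂(sphMeasure d)) *
        ∫ r in (0:ℝ)..1, r ^ (d - 1) * (r ^ K * g r) := by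
  have : Nonempty (Fin d) := ⟨⟨0, by omega⟩⟩
  set g' : ℝ → ℝ := (Set.Iic (1:ℝ)).indicator g with hg'
  have h0 : ∫ x in closedBall (0 : Edim d) 1, g ‖x‖ * A x = ∫ x : Edim d, g' ‖x‖ * A x := by
    rw [← integral_indicator measurableSet_closedBall]
    congr 1
    ext x
    by_cases h : ‖x‖ ≤ 1 <;> simp [hg', Set.indicator, h]
  have h1 : ∫ x : Edim d, g' ‖x‖ * A x
      = ∫ x : ({(0 : Edim d)}ᶜ : Set (Edim d)), g' ‖x.1‖ * A x.1 ∂((volume : Measure (Edim d)).comap (↑)) := by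
    rw [integral_subtype_comap (measurableSet_singleton _).compl fun x ↦ g' (‖x‖) * A x,
      restrict_compl_singleton]
  have h2 : ∫ x : ({(0 : Edim d)}ᶜ : Set (Edim d)), g' ‖x.1‖ * A x.1 ∂((volume : Measure (Edim d)).comap (↑))
      = ∫ z, A (z.1 : Edim d) * ((z.2 : ℝ) ^ K * g' z.2)
          ∂((volume : Measure (Edim d)).toSphere.prod
            (.volumeIoiPow (Module.finrank ℝ (Edim d) - 1))) := by
    rw [← (volume : Measure (Edim d)).measurePreserving_homeomorphUnitSphereProd.integral_comp
        (Homeomorph.measurableEmbedding _)]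
    congr 1
    ext x
    have hx : (x : Edim d) ≠ 0 := x.2
    have hx' : ‖(x : Edim d)‖ ≠ 0 := norm_ne_zero_iff.2 hx
    have e : A x.1 = ‖x.1‖ ^ K * A (‖x.1‖⁻¹ • x.1) := by
      rw [← hA, smul_smul, mul_inv_cancel₀ hx', one_smul]
    rw [e]
    simp
    ring
  rw [h0, h1, h2, integral_prod_mul (fun y : sphere (0 : Edim d) 1 => A y)
    (fun r : Set.Ioi (0:ℝ) => (r : ℝ) ^ K * g' r)]
  rw [sphMeasure]
  congr 1
  simp only [Measure.volumeIoiPow, ENNReal.ofReal]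
  rw [integral_withDensity_eq_integral_smul,
    integral_subtype_comap measurableSet_Ioi fun a : ℝ ↦
      Real.toNNReal (a ^ (Module.finrank ℝ (Edim d) - 1)) • (a ^ K * g' a),
    intervalIntegral.integral_of_le zero_le_one]
  · rw [show Set.Ioc (0:ℝ) 1 = Set.Iic 1 ∩ Set.Ioi 0 by ext; simp [and_comm],
      ← Measure.restrict_restrict measurableSet_Iic, ← integral_indicator measurableSet_Iic]
    apply setIntegral_congr_fun measurableSet_Ioi
    intro r hr
    have hr' : (0:ℝ) ≤ r := le_of_lt hr
    by_cases h : r ≤ 1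
    · simp [hg', Set.indicator, h, NNReal.smul_def, hr']
    · simp [hg', Set.indicator, h]
  · exact (measurable_subtype_coe.pow_const _).real_toNNReal

lemma radial_int (d k : ℕ) (hd : 2 ≤ d) (p : Polynomial ℝ) :
    ∫ r in (0:ℝ)..1, r ^ (d - 1) * (r ^ (k + k) * p.eval (r ^ 2))
      = (1 / 2) * momL ((k : ℝ) + ((d : ℝ) - 2) / 2) p := by
  induction p using Polynomial.induction_on' with
  | add p q hp hq =>
    rw [map_add, mul_add, ← hp, ← hq, ← intervalIntegral.integral_add]
    · congr 1
      ext r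
      rw [Polynomial.eval_add]; ring
    · exact (by fun_prop : Continuous _).intervalIntegrable _ _
    · exact (by fun_prop : Continuous _).intervalIntegrable _ _
  | monomial i a =>
    rw [momL_monomial]
    have : ∀ r : ℝ, r ^ (d - 1) * (r ^ (k + k) * (Polynomial.monomial i a).eval (r ^ 2))
        = a * r ^ (d - 1 + (k + k) + 2 * i) := by
      intro r
      rw [Polynomial.eval_monomial]; ring
    simp only [this]
    rw [intervalIntegral.integral_const_mul, integral_pow]
    push_cast [Nat.cast_sub (show 1 ≤ d by omega)]
    have hd' : (2:ℝ) ≤ d := by exact_mod_cast hd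
    have hk : (0:ℝ) ≤ k := Nat.cast_nonneg k
    have hi : (0:ℝ) ≤ i := Nat.cast_nonneg i
    have h1 : (d:ℝ) - 1 + (k + k) + 2 * i + 1 ≠ 0 := by linarith
    have h2 : (k:ℝ) + (d - 2) / 2 + i + 1 ≠ 0 := by linarith
    rw [one_pow, zero_pow (by omega)]
    field_simp
    ring

/-- Theorem 2.1 of [X06]: the polynomials `Q_{j,ν}^n` are mutually
orthogonal with respect to `⟨·,·⟩_Δ`. -/
theorem stmt19 (d : ℕ) (hd : 2 ≤ d)
    (Y : (m : ℕ) → Fin (sigmaDim d m) → MvPolynomial (Fin d) ℝ)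
    (hYhom : ∀ m ν, (Y m ν).IsHomogeneous m)
    (hYharm : ∀ m ν, mvLaplacian (Y m ν) = 0)
    (hYon : ∀ (m k : ℕ) (ν : Fin (sigmaDim d m)) (μ : Fin (sigmaDim d k)),
      (1 / omegaD d) * ∫ y : sphere (0 : Edim d) 1,
          pEval (Y m ν) y * pEval (Y k μ) y ∂(sphMeasure d) =
        if m = k ∧ (ν : ℕ) = (μ : ℕ) then 1 else 0)
    (n j : ℕ) (hjn : 2 * j ≤ n) (ν : Fin (sigmaDim d (n - 2 * j)))
    (m l : ℕ) (hlm : 2 * l ≤ m) (μ : Fin (sigmaDim d (m - 2 * l)))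
    (hne : (n, j, (ν : ℕ)) ≠ (m, l, (μ : ℕ))) :
    innerDelta d (Qpoly d Y n j ν) (Qpoly d Y m l μ) = 0 := by
  have hd' : (2:ℝ) ≤ d := by exact_mod_cast hd
  have hω : omegaD d ≠ 0 := by
    unfold omegaD
    have : 0 < Real.Gamma ((d:ℝ) / 2) := Real.Gamma_pos_of_pos (by linarith)
    have := Real.pi_pos
    positivity
  have hon := hYon (n - 2 * j) (m - 2 * l) ν μ
  unfold innerDelta
  rw [Qpoly_radial d Y n j hjn, Qpoly_radial d Y m l hlm,
    mvLaplacian_radial d _ _ _ (hYhom _ _) (hYharm _ _),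
    mvLaplacian_radial d _ _ _ (hYhom _ _) (hYharm _ _)]
  simp only [pEval_radial]
  set b₁ : ℝ := ((n - 2 * j : ℕ) : ℝ) + ((d : ℝ) - 2) / 2 with hb₁
  set b₂ : ℝ := ((m - 2 * l : ℕ) : ℝ) + ((d : ℝ) - 2) / 2 with hb₂
  set p : Polynomial ℝ := (Polynomial.C 4 * radE b₁ (Frad b₁ j)) *
    (Polynomial.C 4 * radE b₂ (Frad b₂ l)) with hp
  have hI := polar d hd (fun r => p.eval (r ^ 2))
    (fun x => pEval (Y (n - 2 * j) ν) x * pEval (Y (m - 2 * l) μ) x)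
    ((n - 2 * j) + (m - 2 * l)) (by
      intro r x
      rw [pEval_smul _ (hYhom _ _), pEval_smul _ (hYhom _ _), pow_add]; ring)
  have hcongr : ∀ x : Edim d,
      (Polynomial.C 4 * radE b₁ (Frad b₁ j)).eval (‖x‖ ^ 2) * pEval (Y (n - 2 * j) ν) x *
        ((Polynomial.C 4 * radE b₂ (Frad b₂ l)).eval (‖x‖ ^ 2) * pEval (Y (m - 2 * l) μ) x)
      = p.eval (‖x‖ ^ 2) * (pEval (Y (n - 2 * j) ν) x * pEval (Y (m - 2 * l) μ) x) := by
    intro x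
    simp only [hp, Polynomial.eval_mul]; ring
  simp only [hcongr]
  rw [hI]
  by_cases hc : n - 2 * j = m - 2 * l ∧ (ν : ℕ) = (μ : ℕ)
  · obtain ⟨hk, hν⟩ := hc
    have hjl : j ≠ l := by
      rintro rfl
      apply hne
      rw [hν, show n = m by omega]
    have hb : b₁ = b₂ := by rw [hb₁, hb₂, hk]
    have hr := radial_int d (n - 2 * j) hd p
    nth_rewrite 2 [hk] at hr
    rw [hr, ← hb₁, hp, ← hb]
    have hz : momL b₁ (Polynomial.C 4 * radE b₁ (Frad b₁ j) *
        (Polynomial.C 4 * radE b₁ (Frad b₁ l))) = 0 := by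
      rw [show Polynomial.C 4 * radE b₁ (Frad b₁ j) * (Polynomial.C 4 * radE b₁ (Frad b₁ l))
        = Polynomial.C (4 * 4) * (radE b₁ (Frad b₁ j) * radE b₁ (Frad b₁ l)) by
          rw [map_mul]; ring, ← Polynomial.smul_eq_C_mul, map_smul,
        radial_orth b₁ (by
          have : (0:ℝ) ≤ ((n - 2 * j : ℕ) : ℝ) := Nat.cast_nonneg _
          linarith) j l hjl, smul_zero]
    rw [hz]; simp
  · rw [if_neg hc] at hon
    have : ∫ y : sphere (0 : Edim d) 1,
          pEval (Y (n - 2 * j) ν) y * pEval (Y (m - 2 * l) μ) y ∂(sphMeasure d) = 0 := by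
      rcases mul_eq_zero.1 hon with h | h
      · exact absurd h (one_div_ne_zero hω)
      · exact h
    rw [this]; simp
end
end
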